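/- Let (Ω, F, P) be a probability space, let X : [0,∞) × Ω → ℝ be a jointly measurable stochastic process whose sample paths t ↦ X_t(ω) are continuous for almost every ω, and let f : ℝ → ℝ. Assume: (A1)(i) there exist constants K > 0 and η* > 0 such that for every η ∈ (0, η*) and every x ∈ ℝ one has sup_{y ∈ [x, x+η)} |f(y)| ≥ η^K and sup_{y ∈ (x−η, x]} |f(y)| ≥ η^K; (A1)(ii) f is continuously differentiable and there is a constant C₀ > 0 with |f'(x)| ≤ C₀(1+|x|)^{C₀} for all x ∈ ℝ; (A1)(iii) there exist constants Q > 0, p > 0 and C > 0 such that |f(x)| ≥ Q|x|^p for all |x| ≥ C; (A2)(i) there exists ρ > 0 such that for every r > 1, sup{ (E|X_t − X_s|^r)^{1/r} / (t−s)^ρ : 0 ≤ s < t < s+1 } < ∞; (A2)(iii) there exist positive constants Δ*, γ, λ, μ, K₁, K₂, K₃ such that for every s ≥ 0, every Δ ∈ (0, Δ*) and every η ∈ (0, K₃ Δ^γ), P[ sup_{t ∈ [s, s+Δ]} |X_t − X_s| ≤ η ] ≤ K₁ exp(−K₂ η^{−λ} Δ^μ). Then for every ε > 0, almost surely T^{ε−1}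 ∫₀^T f(X_t)² dt → ∞ as T → ∞. -/

import Mathlib

open Set Filter MeasureTheory

/-!
Each unit block `[n, n + 1]` contributes at least a constant times `n ^ (-e)` to the integral, where
`e > 0` is as small as we please, and summing these contributions gives the divergence.

By the small ball estimate and Borel–Cantelli, for every `δ > 0` the path eventually moves by more
than `n ^ (-δ)` within the `n`-th block, so by the intermediate value theorem it crosses a point at
which `|f|` is at least `n ^ (-δ K) / 2`. Chaining with moments of an order above `1 / δ` bounds the
Hölder constant of the path on `[0, T]` by a multiple of `T ^ δ`, so the path stays near that point
for a time polynomial in `n`. Along this stretch `|f|` at most halves: `f` is Lipschitz on compact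
sets and bounded away from `0` outside one of them. Since `δ` is arbitrary, so is `e`.
-/

open scoped ENNReal Topology
section DyadicChaining

variable {E : Type*} [PseudoMetricSpace E] {x : ℝ → E} {s t T A a α : ℝ}

/-- The increments of the path `x` over the dyadic intervals of length `2 ^ (-(k + 1))` contained in
`[0, T]` are at most `A * a ^ k`. This is the input of the chaining argument. Only lengths at most
`1 / 2` occur, because the moment bounds on increments concern time lags strictly less than `1`. -/
def DyadicIncrementsLE (x : ℝ → E) (T A a : ℝ) : Prop :=
  ∀ k i : ℕ, (i + 1) / 2 ^ (k + 1) ≤ T →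
    dist (x (i / 2 ^ (k + 1))) (x ((i + 1) / 2 ^ (k + 1))) ≤ A * a ^ k

lemma natFloor_two_pow_mul_div_le (ht : 0 ≤ t) (k : ℕ) : (⌊2 ^ k * t⌋₊ : ℝ) / 2 ^ k ≤ t :=
  (div_le_iff₀' (by positivity)).2 (Nat.floor_le (by positivity))

lemma tendsto_natFloor_two_pow_mul_div (ht : 0 ≤ t) :
    Tendsto (fun k : ℕ ↦ (⌊(2 : ℝ) ^ k * t⌋₊ : ℝ) / 2 ^ k) atTop (𝓝 t) := by
  refine ((tendsto_nat_floor_mul_div_atTop ht).comp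
    (tendsto_pow_atTop_atTop_of_one_lt (one_lt_two : (1 : ℝ) < 2))).congr fun k ↦ ?_
  simp only [Function.comp_apply, mul_comm]

lemma natFloor_two_mul_eq_or (ht : 0 ≤ t) :
    ⌊2 * t⌋₊ = 2 * ⌊t⌋₊ ∨ ⌊2 * t⌋₊ = 2 * ⌊t⌋₊ + 1 := by
  have hlow : 2 * ⌊t⌋₊ ≤ ⌊2 * t⌋₊ := Nat.le_floor (by push_cast; linarith [Nat.floor_le ht])
  have hupp : ⌊2 * t⌋₊ < 2 * ⌊t⌋₊ + 2 :=
    (Nat.floor_lt (by positivity)).2 (by push_cast; linarith [Nat.lt_floor_add_one t])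
  omega

lemma natCast_div_two_pow_eq (k i : ℕ) :
    (i : ℝ) / 2 ^ k = ((2 * i : ℕ) : ℝ) / 2 ^ (k + 1) := by
  rw [Nat.cast_mul, pow_succ', Nat.cast_ofNat, mul_div_mul_left _ _ two_ne_zero]

namespace DyadicIncrementsLE

lemma dist_natFloor_succ_le (hx : DyadicIncrementsLE x T A a) (hA : 0 ≤ A) (ha : 0 ≤ a)
    (ht : t ∈ Icc 0 T) (k : ℕ) :
    dist (x (⌊2 ^ k * t⌋₊ / 2 ^ k)) (x (⌊2 ^ (k + 1) * t⌋₊ / 2 ^ (k + 1))) ≤ A * a ^ k := by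
  have hfloor := natFloor_two_mul_eq_or (mul_nonneg (by positivity : (0 : ℝ) ≤ 2 ^ k) ht.1)
  rw [← mul_assoc, ← pow_succ'] at hfloor
  rw [natCast_div_two_pow_eq]
  rcases hfloor with heq | heq
  · rw [heq, dist_self]
    positivity
  · have hle := (natFloor_two_pow_mul_div_le ht.1 (k + 1)).trans ht.2
    rw [heq, Nat.cast_succ] at hle ⊢
    exact hx k _ hle

lemma dist_natFloor_le (hx : DyadicIncrementsLE x T A a) (hA : 0 ≤ A) (ha : 0 ≤ a) (ha1 : a < 1)
    (hxc : ContinuousOn x (Icc 0 T)) (ht : t ∈ Icc 0 T) (m : ℕ) :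
    dist (x (⌊2 ^ m * t⌋₊ / 2 ^ m)) (x t) ≤ A * a ^ m / (1 - a) := by
  refine dist_le_of_le_geometric_of_tendsto a A ha1 (hx.dist_natFloor_succ_le hA ha ht) ?_ m
  exact (hxc t ht).tendsto.comp (tendsto_nhdsWithin_iff.2
    ⟨tendsto_natFloor_two_pow_mul_div ht.1, .of_forall fun k ↦
      ⟨by positivity, (natFloor_two_pow_mul_div_le ht.1 k).trans ht.2⟩⟩)

lemma dist_succ_le (hx : DyadicIncrementsLE x T A a) {m i : ℕ} (hi : (i + 1) / 2 ^ m ≤ T) :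
    dist (x (i / 2 ^ m)) (x ((i + 1) / 2 ^ m)) ≤ 2 * (A * a ^ m) := by
  have hleft : (i : ℝ) / 2 ^ m = ((2 * i : ℕ) : ℝ) / 2 ^ (m + 1) := natCast_div_two_pow_eq m i
  have hmid : (((2 * i : ℕ) : ℝ) + 1) / 2 ^ (m + 1) = ((2 * i + 1 : ℕ) : ℝ) / 2 ^ (m + 1) := by
    rw [Nat.cast_succ]
  have hright : ((i : ℝ) + 1) / 2 ^ m = (((2 * i + 1 : ℕ) : ℝ) + 1) / 2 ^ (m + 1) := by
    rw [← Nat.cast_succ, natCast_div_two_pow_eq, ← Nat.cast_succ]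
    rfl
  rw [hright] at hi
  have hsecond := hx m (2 * i + 1) hi
  have hfirst := hx m (2 * i) (by rw [hmid]; refine le_trans ?_ hi; gcongr; linarith)
  rw [hmid] at hfirst
  rw [hleft, hright]
  linarith [dist_triangle (x ((2 * i : ℕ) / 2 ^ (m + 1))) (x ((2 * i + 1 : ℕ) / 2 ^ (m + 1)))
    (x (((2 * i + 1 : ℕ) + 1) / 2 ^ (m + 1)))]

lemma dist_natFloor_natFloor_le (hx : DyadicIncrementsLE x T A a) (hA : 0 ≤ A) (ha : 0 ≤ a)
    (hs : 0 ≤ s) (hst : s ≤ t) (ht : t ≤ T) {m : ℕ} (hm : t - s ≤ 1 / 2 ^ m) :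
    dist (x (⌊2 ^ m * s⌋₊ / 2 ^ m)) (x (⌊2 ^ m * t⌋₊ / 2 ^ m)) ≤ 2 * (A * a ^ m) := by
  have hfloor_le : ⌊2 ^ m * s⌋₊ ≤ ⌊2 ^ m * t⌋₊ := Nat.floor_mono (by gcongr)
  have hfloor_ge : ⌊2 ^ m * t⌋₊ ≤ ⌊2 ^ m * s⌋₊ + 1 := by
    rw [← Nat.floor_add_one (by positivity)]
    refine Nat.floor_mono ?_
    rw [le_div_iff₀' (by positivity)] at hm
    linarith
  obtain heq | heq : ⌊2 ^ m * t⌋₊ = ⌊2 ^ m * s⌋₊ ∨ ⌊2 ^ m * t⌋₊ = ⌊2 ^ m * s⌋₊ + 1 := by omega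
  · rw [heq, dist_self]
    positivity
  · have hle := (natFloor_two_pow_mul_div_le (hs.trans hst) m).trans ht
    rw [heq, Nat.cast_succ] at hle ⊢
    exact hx.dist_succ_le hle

lemma dist_le_of_sub_le (hx : DyadicIncrementsLE x T A a) (hA : 0 ≤ A) (ha : 0 ≤ a) (ha1 : a < 1)
    (hxc : ContinuousOn x (Icc 0 T)) (hs : 0 ≤ s) (hst : s ≤ t) (ht : t ≤ T) {m : ℕ}
    (hm : t - s ≤ 1 / 2 ^ m) :
    dist (x s) (x t) ≤ 4 / (1 - a) * (A * a ^ m) := by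
  have hs_near := hx.dist_natFloor_le hA ha ha1 hxc ⟨hs, hst.trans ht⟩ m
  have ht_near := hx.dist_natFloor_le hA ha ha1 hxc ⟨hs.trans hst, ht⟩ m
  have hgrid := hx.dist_natFloor_natFloor_le hA ha hs hst ht hm
  rw [dist_comm] at hs_near
  have htri := dist_triangle4 (x s) (x (⌊2 ^ m * s⌋₊ / 2 ^ m)) (x (⌊2 ^ m * t⌋₊ / 2 ^ m)) (x t)
  have hgeom : A * a ^ m ≤ A * a ^ m / (1 - a) :=
    le_div_self (by positivity) (by linarith) (by linarith)
  calc dist (x s) (x t) ≤ 4 * (A * a ^ m / (1 - a)) := by linarith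
    _ = 4 / (1 - a) * (A * a ^ m) := by ring

theorem dist_le_mul_abs_sub_rpow (hx : DyadicIncrementsLE x T A (2 ^ (-α))) (hA : 0 ≤ A)
    (hα : 0 < α) (hxc : ContinuousOn x (Icc 0 T)) (hs : s ∈ Icc 0 T) (ht : t ∈ Icc 0 T)
    (hst : |s - t| ≤ 1) :
    dist (x s) (x t) ≤ 4 / (1 - 2 ^ (-α)) * 2 ^ α * A * |s - t| ^ α := by
  wlog hle : s ≤ t generalizing s t
  · rw [dist_comm, abs_sub_comm]
    exact this ht hs (abs_sub_comm s t ▸ hst) (le_of_not_ge hle)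
  rcases hle.eq_or_lt with rfl | hlt
  · simp [Real.zero_rpow hα.ne']
  have hd : 0 < t - s := sub_pos.2 hlt
  rw [abs_sub_comm, abs_of_pos hd] at hst ⊢
  have ha1 : (2 : ℝ) ^ (-α) < 1 := Real.rpow_lt_one_of_one_lt_of_neg one_lt_two (by linarith)
  obtain ⟨m, hm_lt, hm_le⟩ :=
    exists_nat_pow_near_of_lt_one hd hst (by norm_num : (0 : ℝ) < 1 / 2) (by norm_num)
  have hscale : ((2 : ℝ) ^ (-α)) ^ m ≤ 2 ^ α * (t - s) ^ α := by
    calc ((2 : ℝ) ^ (-α)) ^ m = ((1 / 2) ^ m) ^ α := by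
          rw [Real.rpow_neg two_pos.le, ← Real.inv_rpow two_pos.le,
            Real.rpow_pow_comm (by norm_num), one_div]
      _ ≤ (2 * (t - s)) ^ α := by
          gcongr
          rw [pow_succ] at hm_lt
          linarith
      _ = 2 ^ α * (t - s) ^ α := Real.mul_rpow two_pos.le hd.le
  rw [one_div_pow] at hm_le
  calc dist (x s) (x t) ≤ 4 / (1 - 2 ^ (-α)) * (A * ((2 : ℝ) ^ (-α)) ^ m) :=
        hx.dist_le_of_sub_le hA (by positivity) ha1 hxc hs.1 hle ht.2 hm_le
    _ ≤ 4 / (1 - 2 ^ (-α)) * (A * (2 ^ α * (t - s) ^ α)) := by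
        have : 0 < 1 - (2 : ℝ) ^ (-α) := sub_pos.2 ha1
        gcongr
    _ = 4 / (1 - 2 ^ (-α)) * 2 ^ α * A * (t - s) ^ α := by ring

end DyadicIncrementsLE

end DyadicChaining

section Moments

variable {Ω E : Type*} [MeasurableSpace Ω] {P : Measure Ω} [NormedAddCommGroup E]

lemma ae_bddAbove_range_norm_of_tsum_eLpNorm_rpow_ne_top {ι : Type*} [Countable ι]
    {Y : ι → Ω → E} (hY : ∀ i, AEStronglyMeasurable (Y i) P) {p : ℝ≥0∞} (hp : p ≠ 0)
    (hp_top : p ≠ ∞) (hsum : ∑' i, eLpNorm (Y i) p P ^ p.toReal ≠ ∞) :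
    ∀ᵐ ω ∂P, BddAbove (range fun i ↦ ‖Y i ω‖) := by
  have hp_pos : 0 < p.toReal := ENNReal.toReal_pos hp hp_top
  have hmeas (i : ι) : AEMeasurable (fun ω ↦ ‖Y i ω‖ₑ ^ p.toReal) P :=
    (hY i).enorm.pow_const _
  have hint : ∫⁻ ω, ∑' i, ‖Y i ω‖ₑ ^ p.toReal ∂P ≠ ∞ := by
    simpa only [lintegral_tsum hmeas, eLpNorm_eq_lintegral_rpow_enorm_toReal hp hp_top, one_div,
      ENNReal.rpow_inv_rpow hp_pos.ne'] using hsum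
  filter_upwards [ae_lt_top' (.tsum hmeas) hint] with ω hω
  refine ⟨((∑' i, ‖Y i ω‖ₑ ^ p.toReal) ^ p.toReal⁻¹).toReal, forall_mem_range.2 fun i ↦ ?_⟩
  rw [← toReal_enorm]
  refine ENNReal.toReal_mono (ENNReal.rpow_ne_top_of_nonneg (by positivity) hω.ne) ?_
  exact (ENNReal.le_rpow_inv_iff hp_pos).2 (ENNReal.le_tsum i)

lemma summable_two_rpow_pow_mul_natCast_succ_rpow {b c : ℝ} (hb : b < 0) (hc : c < -1) :
    Summable fun q : ℕ × ℕ ↦ ((2 : ℝ) ^ b) ^ (q.1 + 1) * ((q.2 : ℝ) + 1) ^ c := by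
  have hgeom : Summable fun k : ℕ ↦ ((2 : ℝ) ^ b) ^ (k + 1) :=
    (summable_nat_add_iff 1).2 (summable_geometric_of_lt_one (by positivity)
      (Real.rpow_lt_one_of_one_lt_of_neg one_lt_two hb))
  have hzeta : Summable fun i : ℕ ↦ ((i : ℝ) + 1) ^ c := by
    exact_mod_cast (summable_nat_add_iff 1).2 (Real.summable_nat_rpow.2 hc)
  exact hgeom.mul_of_nonneg hzeta (fun k ↦ by positivity) (fun i ↦ by positivity)

/-- The increment of `X` over `[i / 2 ^ (k + 1), (i + 1) / 2 ^ (k + 1)]`, divided by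
`(2 ^ (k + 1)) ^ (-α) * ((i + 1) / 2 ^ (k + 1)) ^ δ`, the bound on it that chaining to a modulus of
Hölder exponent `α` and growth `δ` requires. -/
noncomputable def normalizedDyadicIncrement [NormedSpace ℝ E] (X : ℝ → Ω → E) (α δ : ℝ)
    (k i : ℕ) (ω : Ω) : E :=
  (((2 : ℝ) ^ (k + 1)) ^ α * (((i : ℝ) + 1) / 2 ^ (k + 1)) ^ (-δ)) •
    (X ((i + 1) / 2 ^ (k + 1)) ω - X (i / 2 ^ (k + 1)) ω)

variable [NormedSpace ℝ E] {X : ℝ → Ω → E} {r ρ α δ B : ℝ}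

lemma eLpNorm_normalizedDyadicIncrement_rpow_le (hr : 0 < r)
    (hmom : ∀ s t : ℝ, 0 ≤ s → s < t → t < s + 1 →
      eLpNorm (fun ω ↦ X t ω - X s ω) (ENNReal.ofReal r) P ≤ ENNReal.ofReal (B * (t - s) ^ ρ))
    (k i : ℕ) :
    eLpNorm (normalizedDyadicIncrement X α δ k i) (ENNReal.ofReal r) P ^ r ≤ ENNReal.ofReal
      (|B| ^ r * (((2 : ℝ) ^ ((α + δ - ρ) * r)) ^ (k + 1) * ((i : ℝ) + 1) ^ (-(δ * r)))) := by
  set u : ℝ := 2 ^ (k + 1) with hu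
  have hu_gt : 1 < u := one_lt_pow₀ one_lt_two k.succ_ne_zero
  have hu_pos : 0 < u := one_pos.trans hu_gt
  have hi_pos : (0 : ℝ) < i + 1 := by positivity
  have hstep : ((i : ℝ) + 1) / u - i / u = u⁻¹ := by field_simp; ring
  have hincr := hmom (i / u) ((i + 1) / u) (by positivity) (by gcongr; linarith)
    (by linarith [inv_lt_one_of_one_lt₀ hu_gt])
  rw [hstep] at hincr
  have hnorm : eLpNorm (normalizedDyadicIncrement X α δ k i) (ENNReal.ofReal r) P ≤
      ENNReal.ofReal (|B| * (u ^ (α + δ - ρ) * ((i : ℝ) + 1) ^ (-δ))) := by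
    have hw : 0 ≤ u ^ α * ((i + 1) / u) ^ (-δ) := by positivity
    calc _ = ENNReal.ofReal (u ^ α * ((i + 1) / u) ^ (-δ)) *
          eLpNorm (fun ω ↦ X ((i + 1) / u) ω - X (i / u) ω) (ENNReal.ofReal r) P := by
          rw [← Real.enorm_of_nonneg hw, ← eLpNorm_const_smul]
          rfl
      _ ≤ ENNReal.ofReal (u ^ α * ((i + 1) / u) ^ (-δ)) * ENNReal.ofReal (|B| * u⁻¹ ^ ρ) := by
          gcongr
          exact hincr.trans (ENNReal.ofReal_le_ofReal (by gcongr; exact le_abs_self B))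
      _ = _ := by
          rw [← ENNReal.ofReal_mul (by positivity), Real.div_rpow hi_pos.le hu_pos.le,
            Real.inv_rpow hu_pos.le, Real.rpow_sub hu_pos, Real.rpow_add hu_pos,
            Real.rpow_neg hu_pos.le δ]
          field_simp
  refine (ENNReal.rpow_le_rpow hnorm hr.le).trans_eq ?_
  rw [ENNReal.ofReal_rpow_of_nonneg (by positivity) hr.le, Real.mul_rpow (by positivity)
    (by positivity), Real.mul_rpow (by positivity) (by positivity), ← Real.rpow_mul hi_pos.le,
    ← Real.rpow_mul hu_pos.le, neg_mul, hu, Real.rpow_pow_comm two_pos.le]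

theorem ae_exists_dyadicIncrementsLE (hX : ∀ t, AEStronglyMeasurable (X t) P) (hr : 0 < r)
    (hδ : 1 < δ * r) (hα : α + δ < ρ)
    (hmom : ∀ s t : ℝ, 0 ≤ s → s < t → t < s + 1 →
      eLpNorm (fun ω ↦ X t ω - X s ω) (ENNReal.ofReal r) P ≤ ENNReal.ofReal (B * (t - s) ^ ρ)) :
    ∀ᵐ ω ∂P, ∃ G > 0, ∀ T, DyadicIncrementsLE (fun t ↦ X t ω) T (G * T ^ δ) (2 ^ (-α)) := by
  have hδ_pos : 0 < δ := pos_of_mul_pos_left (one_pos.trans hδ) hr.le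
  have hsummable := (summable_two_rpow_pow_mul_natCast_succ_rpow
    (mul_neg_of_neg_of_pos (sub_neg.2 hα) hr) (neg_lt_neg hδ)).mul_left (|B| ^ r)
  have hbdd : ∀ᵐ ω ∂P, BddAbove (range fun q : ℕ × ℕ ↦
      ‖normalizedDyadicIncrement X α δ q.1 q.2 ω‖) := by
    refine ae_bddAbove_range_norm_of_tsum_eLpNorm_rpow_ne_top
      (fun q ↦ ((hX _).sub (hX _)).const_smul _) (ENNReal.ofReal_pos.2 hr).ne'
      ENNReal.ofReal_ne_top ?_
    rw [ENNReal.toReal_ofReal hr.le]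
    exact ne_top_of_le_ne_top hsummable.tsum_ofReal_ne_top
      (ENNReal.tsum_le_tsum fun q ↦
        eLpNorm_normalizedDyadicIncrement_rpow_le hr hmom q.1 q.2)
  filter_upwards [hbdd] with ω ⟨M, hM⟩
  refine ⟨max M 1 * 2 ^ (-α), by positivity, fun T k i hi ↦ ?_⟩
  have hq : ‖normalizedDyadicIncrement X α δ k i ω‖ ≤ max M 1 :=
    (hM (mem_range_self (k, i))).trans (le_max_left M 1)
  set u : ℝ := 2 ^ (k + 1) with hu
  have hu_pos : 0 < u := by positivity
  have hτ : 0 < ((i : ℝ) + 1) / u := by positivity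
  have hgeom : u ^ (-α) = 2 ^ (-α) * ((2 : ℝ) ^ (-α)) ^ k := by
    rw [hu, ← Real.rpow_pow_comm two_pos.le, pow_succ']
  rw [normalizedDyadicIncrement, norm_smul, Real.norm_of_nonneg (by positivity), ← hu,
    Real.rpow_neg hτ.le, ← div_eq_mul_inv, div_mul_eq_mul_div, div_le_iff₀ (by positivity)] at hq
  calc dist (X (i / u) ω) (X ((i + 1) / u) ω)
      = u ^ (-α) * (u ^ α * ‖X ((i + 1) / u) ω - X (i / u) ω‖) := by
        rw [← mul_assoc, ← Real.rpow_add hu_pos, neg_add_cancel, Real.rpow_zero, one_mul,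
          dist_eq_norm, norm_sub_rev]
    _ ≤ u ^ (-α) * (max M 1 * T ^ δ) := by
        refine mul_le_mul_of_nonneg_left (hq.trans ?_) (by positivity)
        gcongr
    _ = max M 1 * 2 ^ (-α) * T ^ δ * (2 ^ (-α)) ^ k := by rw [hgeom]; ring

theorem ae_exists_dist_le_mul_rpow_mul_abs_sub_rpow (hX : ∀ t, AEStronglyMeasurable (X t) P)
    (hXc : ∀ᵐ ω ∂P, ContinuousOn (fun t ↦ X t ω) (Ici 0)) (hr : 0 < r) (hα : 0 < α)
    (hδ : 1 < δ * r) (hαδ : α + δ < ρ)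
    (hmom : ∀ s t : ℝ, 0 ≤ s → s < t → t < s + 1 →
      eLpNorm (fun ω ↦ X t ω - X s ω) (ENNReal.ofReal r) P ≤ ENNReal.ofReal (B * (t - s) ^ ρ)) :
    ∀ᵐ ω ∂P, ∃ G > 0, ∀ T, ∀ s ∈ Icc 0 T, ∀ t ∈ Icc 0 T, |s - t| ≤ 1 →
      dist (X s ω) (X t ω) ≤ G * T ^ δ * |s - t| ^ α := by
  filter_upwards [hXc, ae_exists_dyadicIncrementsLE hX hr hδ hαδ hmom] with ω hc ⟨G, hG, hdyadic⟩
  have ha1 : 0 < 1 - (2 : ℝ) ^ (-α) :=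
    sub_pos.2 (Real.rpow_lt_one_of_one_lt_of_neg one_lt_two (by linarith))
  refine ⟨4 / (1 - 2 ^ (-α)) * 2 ^ α * G, by positivity, fun T s hs t ht hst ↦ ?_⟩
  have hT : 0 ≤ T := hs.1.trans hs.2
  refine ((hdyadic T).dist_le_mul_abs_sub_rpow (by positivity) hα (hc.mono Icc_subset_Ici_self)
    hs ht hst).trans_eq ?_
  ring

end Moments

section SmallBalls

lemma summable_exp_neg_mul_natCast_rpow {c β : ℝ} (hc : 0 < c) (hβ : 0 < β) :
    Summable fun n : ℕ ↦ Real.exp (-c * (n : ℝ) ^ β) := by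
  have hsq : Summable fun n : ℕ ↦ (n : ℝ) ^ (-2 : ℝ) := Real.summable_nat_rpow.2 (by norm_num)
  refine summable_of_isBigO_nat hsq ?_
  have hdecay := (isLittleO_exp_neg_mul_rpow_atTop hc (-2 / β)).isBigO.comp_tendsto
    ((tendsto_rpow_atTop hβ).comp tendsto_natCast_atTop_atTop)
  refine hdecay.congr_right fun n ↦ ?_
  simp only [Function.comp_apply]
  rw [← Real.rpow_mul n.cast_nonneg, mul_div_cancel₀ _ hβ.ne']

variable {Ω E : Type*} [MeasurableSpace Ω] {P : Measure Ω} [PseudoMetricSpace E] {X : ℝ → Ω → E}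
  {lam δ : ℝ}

theorem ae_eventually_exists_rpow_neg_lt_dist {h η₀ c K : ℝ} (hη₀ : 0 < η₀)
    (hc : 0 < c) (hlam : 0 < lam) (hδ : 0 < δ)
    (hball : ∀ n : ℕ, ∀ η ∈ Ioo 0 η₀, P {ω | ∀ t ∈ Icc (n : ℝ) (n + h), dist (X t ω) (X n ω) ≤ η} ≤
      ENNReal.ofReal (K * Real.exp (-c * η ^ (-lam)))) :
    ∀ᵐ ω ∂P, ∀ᶠ n : ℕ in atTop,
      ∃ t ∈ Icc (n : ℝ) (n + h), (n : ℝ) ^ (-δ) < dist (X t ω) (X n ω) := by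
  obtain ⟨N, hN⟩ := eventually_atTop.1 ((eventually_gt_atTop 0).and
    (((tendsto_rpow_neg_atTop hδ).comp tendsto_natCast_atTop_atTop).eventually_lt_const hη₀))
  have hbound (n : ℕ) : P {ω | ∀ t ∈ Icc ((n + N : ℕ) : ℝ) ((n + N : ℕ) + h),
      dist (X t ω) (X (n + N : ℕ) ω) ≤ ((n + N : ℕ) : ℝ) ^ (-δ)} ≤
      ENNReal.ofReal (K * Real.exp (-c * ((n + N : ℕ) : ℝ) ^ (δ * lam))) := by
    obtain ⟨hpos, hlt⟩ := hN (n + N) (Nat.le_add_left N n)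
    have hpos' : (0 : ℝ) < (n + N : ℕ) := Nat.cast_pos.2 hpos
    rw [← neg_mul_neg δ, Real.rpow_mul hpos'.le]
    exact hball _ _ ⟨by positivity, hlt⟩
  have hsummable : Summable fun n : ℕ ↦ K * Real.exp (-c * ((n + N : ℕ) : ℝ) ^ (δ * lam)) :=
    ((summable_nat_add_iff N).2
      (summable_exp_neg_mul_natCast_rpow hc (mul_pos hδ hlam))).mul_left K
  filter_upwards [ae_eventually_notMem (ne_top_of_le_ne_top hsummable.tsum_ofReal_ne_top
    (ENNReal.tsum_le_tsum hbound))] with ω hω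
  rw [← map_add_atTop_eq_nat N, eventually_map]
  filter_upwards [hω] with n hn
  simpa only [mem_ofPred_eq, not_forall, not_le, exists_prop] using hn

theorem ae_eventually_exists_mem_Icc_add_one_rpow_neg_lt_dist {Δs γ μ₀ K₁ K₂ K₃ : ℝ}
    (hΔs : 0 < Δs) (hK₂ : 0 < K₂) (hK₃ : 0 < K₃) (hlam : 0 < lam) (hδ : 0 < δ)
    (hball : ∀ s : ℝ, 0 ≤ s → ∀ Δ ∈ Ioo 0 Δs, ∀ η ∈ Ioo 0 (K₃ * Δ ^ γ),
      P {ω | ∀ t ∈ Icc s (s + Δ), dist (X t ω) (X s ω) ≤ η} ≤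
        ENNReal.ofReal (K₁ * Real.exp (-K₂ * η ^ (-lam) * Δ ^ μ₀))) :
    ∀ᵐ ω ∂P, ∀ᶠ n : ℕ in atTop,
      ∃ t ∈ Icc (n : ℝ) (n + 1), (n : ℝ) ^ (-δ) < dist (X t ω) (X n ω) := by
  obtain ⟨Δ, hΔ, hΔ_lt⟩ := exists_between (lt_min hΔs one_pos)
  have hmove := ae_eventually_exists_rpow_neg_lt_dist (P := P) (X := X) (h := Δ) (K := K₁)
    (by positivity : 0 < K₃ * Δ ^ γ) (by positivity : 0 < K₂ * Δ ^ μ₀) hlam hδ fun n η hη ↦ by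
      rw [← neg_mul, mul_right_comm]
      exact hball n n.cast_nonneg Δ ⟨hΔ, hΔ_lt.trans_le (min_le_left _ _)⟩ η hη
  filter_upwards [hmove] with ω hω
  filter_upwards [hω] with n ⟨t, ht, hlt⟩
  exact ⟨t, ⟨ht.1, ht.2.trans (by linarith [min_le_right Δs 1])⟩, hlt⟩

end SmallBalls

section Persistence

/-- At the scales `θ ≤ c`, the size `‖f x‖ ≥ θ` of `f` persists up to a factor `2` on the ball of
radius `c * θ` around `x`. The constant is uniform in `x`: `f` need not be globally Lipschitz,
because where it is large it has no need to be regular. -/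
def NormPersistent {E F : Type*} [PseudoMetricSpace E] [Norm F] (f : E → F) (c : ℝ) : Prop :=
  ∀ θ ∈ Ioc 0 c, ∀ x y, θ ≤ ‖f x‖ → dist x y ≤ c * θ → θ / 2 ≤ ‖f y‖

theorem exists_normPersistent_of_locallyLipschitz {E F : Type*} [PseudoMetricSpace E]
    [ProperSpace E] [SeminormedAddCommGroup F] {f : E → F} (hf : LocallyLipschitz f) {κ : ℝ}
    (hκ : 0 < κ) (hfκ : ∀ᶠ x in cocompact E, κ ≤ ‖f x‖) : ∃ c > 0, NormPersistent f c := by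
  obtain ⟨S, hS, hSκ⟩ := mem_cocompact'.1 hfκ
  obtain ⟨L, hL⟩ := (hf.locallyLipschitzOn (s := Metric.cthickening 1 S)
    ).exists_lipschitzOnWith_of_compact hS.cthickening
  refine ⟨min (min κ 1) (1 / (2 * (L + 1))), by positivity, fun θ ⟨hθ, hθc⟩ x y hx hxy ↦ ?_⟩
  set c := min (min κ 1) (1 / (2 * (L + 1)))
  have hcκ : c ≤ κ := (min_le_left _ _).trans (min_le_left _ _)
  have hc1 : c ≤ 1 := (min_le_left _ _).trans (min_le_right _ _)
  have hcL : (L + 1) * c ≤ 1 / 2 := by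
    calc (L + 1) * c ≤ (L + 1) * (1 / (2 * (L + 1))) := by gcongr; exact min_le_right _ _
      _ = 1 / 2 := by field_simp
  by_cases hy : y ∈ S
  · have hyx : dist x y ≤ 1 := by nlinarith
    have hfxy : ‖f x - f y‖ ≤ θ / 2 := by
      calc ‖f x - f y‖ ≤ L * dist x y := by
            rw [← dist_eq_norm]
            exact hL.dist_le_mul _ (Metric.mem_cthickening_of_dist_le x y 1 S hy hyx) _
              (Metric.self_subset_cthickening S hy)
        _ ≤ (L + 1) * (c * θ) := by gcongr; linarith
        _ ≤ θ / 2 := by nlinarith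
    linarith [norm_sub_norm_le (f x) (f y)]
  · have hfy : κ ≤ ‖f y‖ := by
      by_contra hlt
      exact hy (hSκ hlt)
    linarith

lemma eventually_cocompact_le_of_mul_rpow_le {E : Type*} [SeminormedAddCommGroup E]
    [ProperSpace E] {g : E → ℝ} {Q p C : ℝ} (hQ : 0 ≤ Q) (hp : 0 ≤ p) (hC : 0 ≤ C)
    (hg : ∀ x, C ≤ ‖x‖ → Q * ‖x‖ ^ p ≤ g x) :
    ∀ᶠ x in cocompact E, Q * C ^ p ≤ g x := by
  filter_upwards [(tendsto_norm_cocompact_atTop (E := E)).eventually_ge_atTop C] with x hx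
  exact (mul_le_mul_of_nonneg_left (Real.rpow_le_rpow hC hx hp) hQ).trans (hg x hx)

end Persistence

section Paths

lemma exists_half_le_of_coe_le_iSup {ι : Type*} {g : ι → ℝ} {S : Set ι} {a : ℝ} (ha : 0 < a)
    (h : (a : EReal) ≤ ⨆ i ∈ S, (g i : EReal)) : ∃ i ∈ S, a / 2 ≤ g i := by
  obtain ⟨i, hi, hlt⟩ := lt_biSup_iff.1 ((EReal.coe_lt_coe_iff.2 (half_lt_self ha)).trans_le h)
  exact ⟨i, hi, (EReal.coe_lt_coe_iff.1 hlt).le⟩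

lemma exists_half_le_comp_of_lt_abs_sub {x g : ℝ → ℝ} {a b t η m : ℝ}
    (hx : ContinuousOn x (Icc a b)) (ht : t ∈ Icc a b) (hη : η < |x t - x a|) (hm : 0 < m)
    (hright : (m : EReal) ≤ ⨆ y ∈ Ico (x a) (x a + η), (g y : EReal))
    (hleft : (m : EReal) ≤ ⨆ y ∈ Ioc (x a - η) (x a), (g y : EReal)) :
    ∃ s ∈ Icc a b, m / 2 ≤ g (x s) := by
  have hsub : uIcc a t ⊆ Icc a b := by
    rw [uIcc_of_le ht.1]
    exact Icc_subset_Icc_right ht.2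
  suffices ∃ y ∈ uIcc (x a) (x t), m / 2 ≤ g y by
    obtain ⟨y, hy, hgy⟩ := this
    obtain ⟨s, hs, rfl⟩ := intermediate_value_uIcc (hx.mono hsub) hy
    exact ⟨s, hsub hs, hgy⟩
  rcases lt_abs.1 hη with hup | hdown
  · obtain ⟨y, hy, hgy⟩ := exists_half_le_of_coe_le_iSup hm hright
    exact ⟨y, mem_uIcc.2 (.inl ⟨hy.1, by linarith [hy.2]⟩), hgy⟩
  · obtain ⟨y, hy, hgy⟩ := exists_half_le_of_coe_le_iSup hm hleft
    exact ⟨y, mem_uIcc.2 (.inr ⟨by linarith [hy.1], hy.2⟩), hgy⟩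

lemma mul_le_integral_of_forall_abs_sub_le {g : ℝ → ℝ} {a b s r m : ℝ}
    (hg : IntervalIntegrable g volume a b) (hg0 : ∀ t, 0 ≤ g t) (hs : s ∈ Icc a b)
    (hr : 0 ≤ r) (hrab : r ≤ (b - a) / 2) (hm : ∀ t ∈ Icc a b, |s - t| ≤ r → m ≤ g t) :
    r * m ≤ ∫ t in a..b, g t := by
  obtain ⟨u, hau, hub, hu⟩ : ∃ u, a ≤ u ∧ u + r ≤ b ∧ ∀ t ∈ Icc u (u + r), |s - t| ≤ r := by
    rcases le_total s ((a + b) / 2) with hmid | hmid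
    · exact ⟨s, hs.1, by linarith, fun t ht ↦ abs_le.2 ⟨by linarith [ht.2], by linarith [ht.1]⟩⟩
    · exact ⟨s - r, by linarith, by linarith [hs.2],
        fun t ht ↦ abs_le.2 ⟨by linarith [ht.2], by linarith [ht.1]⟩⟩
  have hsub : uIcc u (u + r) ⊆ uIcc a b := by
    rw [uIcc_of_le (by linarith), uIcc_of_le (by linarith)]
    exact Icc_subset_Icc hau hub
  calc r * m = ∫ _ in u..u + r, m := by simp
    _ ≤ ∫ t in u..u + r, g t :=
        intervalIntegral.integral_mono_on (by linarith) intervalIntegrable_const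
          (hg.mono_set hsub) fun t ht ↦ hm t ⟨hau.trans ht.1, ht.2.trans hub⟩ (hu t ht)
    _ ≤ ∫ t in a..b, g t :=
        intervalIntegral.integral_mono_interval hau (by linarith) hub (.of_forall hg0) hg

end Paths

section Divergence

lemma intervalIntegrable_of_locallyIntegrableOn_Ici {F : Type*} [NormedAddCommGroup F] {g : ℝ → F}
    {T a b : ℝ} (hg : LocallyIntegrableOn g (Ici T)) (ha : T ≤ a) (hb : T ≤ b) :
    IntervalIntegrable g volume a b :=
  (hg.integrableOn_compact_subset (fun _ ht ↦ (le_min ha hb).trans ht.1)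
    isCompact_uIcc).intervalIntegrable

namespace NormPersistent

variable {E F : Type*} [PseudoMetricSpace E] [SeminormedAddCommGroup F] {f : E → F} {x : ℝ → E}
  {a b s u c θ H M G α β δ : ℝ}

lemma min_mul_sq_le_integral (hf : NormPersistent f c) (hc : 0 < c) (hα : 0 < α) (hH : 0 < H)
    (hint : IntervalIntegrable (fun t ↦ ‖f (x t)‖ ^ 2) volume a b)
    (hx : ∀ s ∈ Icc a b, ∀ t ∈ Icc a b, dist (x s) (x t) ≤ H * |s - t| ^ α)
    (hθ : θ ∈ Ioc 0 c) (hs : s ∈ Icc a b) (hsθ : θ ≤ ‖f (x s)‖) :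
    min ((c * θ / H) ^ α⁻¹) ((b - a) / 2) * (θ / 2) ^ 2 ≤ ∫ t in a..b, ‖f (x t)‖ ^ 2 := by
  have hθ0 := hθ.1
  have hab : a ≤ b := hs.1.trans hs.2
  refine mul_le_integral_of_forall_abs_sub_le hint (fun t ↦ by positivity) hs
    (le_min (by positivity) (by linarith)) (min_le_right _ _) fun t ht hst ↦ ?_
  have hnear : |s - t| ^ α ≤ c * θ / H :=
    (Real.le_rpow_inv_iff_of_pos (abs_nonneg _) (by positivity) hα).1 (hst.trans (min_le_left _ _))
  have hdist : dist (x s) (x t) ≤ c * θ :=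
    (hx s hs t ht).trans ((le_div_iff₀' hH).1 hnear)
  exact pow_le_pow_left₀ (by positivity) (hf θ hθ _ _ hsθ hdist) 2

lemma mul_rpow_le_integral (hf : NormPersistent f c) (hc : 0 < c) (hα : 0 < α) (hM : 0 < M)
    (hu : 0 < u) (hint : IntervalIntegrable (fun t ↦ ‖f (x t)‖ ^ 2) volume a (a + 1))
    (hx : ∀ s ∈ Icc a (a + 1), ∀ t ∈ Icc a (a + 1), dist (x s) (x t) ≤ M * u ^ δ * |s - t| ^ α)
    (hθ : u ^ (-β) ≤ 2 * c) (hr : (c / (2 * M)) ^ α⁻¹ * u ^ (-((β + δ) / α)) ≤ 1 / 2)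
    (hs : s ∈ Icc a (a + 1)) (hsθ : u ^ (-β) / 2 ≤ ‖f (x s)‖) :
    (c / (2 * M)) ^ α⁻¹ / 16 * u ^ (-((β + δ) / α + 2 * β)) ≤
      ∫ t in a..a + 1, ‖f (x t)‖ ^ 2 := by
  have hradius : (c * (u ^ (-β) / 2) / (M * u ^ δ)) ^ α⁻¹ =
      (c / (2 * M)) ^ α⁻¹ * u ^ (-((β + δ) / α)) := by
    rw [div_eq_mul_inv (β + δ), ← neg_mul, Real.rpow_mul hu.le, ← Real.mul_rpow (by positivity)
      (by positivity), neg_add, Real.rpow_add hu, Real.rpow_neg hu.le δ]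
    congr 1
    field_simp
  have hblock := hf.min_mul_sq_le_integral hc hα (by positivity) hint hx
    ⟨by positivity, by linarith⟩ hs hsθ
  rw [hradius, add_sub_cancel_left, min_eq_left hr] at hblock
  refine le_of_eq_of_le ?_ hblock
  rw [neg_add, Real.rpow_add hu, two_mul β, neg_add, Real.rpow_add hu]
  ring

theorem exists_eventually_mul_rpow_le_integral (hf : NormPersistent f c) (hc : 0 < c)
    (hα : 0 < α) (hβ : 0 < β) (hδ : 0 ≤ δ) (hG : 0 < G)
    (hint : LocallyIntegrableOn (fun t ↦ ‖f (x t)‖ ^ 2) (Ici 0))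
    (hx : ∀ T, ∀ s ∈ Icc 0 T, ∀ t ∈ Icc 0 T, |s - t| ≤ 1 →
      dist (x s) (x t) ≤ G * T ^ δ * |s - t| ^ α)
    (hlarge : ∀ᶠ n : ℕ in atTop, ∃ s ∈ Icc (n : ℝ) (n + 1), (n : ℝ) ^ (-β) / 2 ≤ ‖f (x s)‖) :
    ∃ κ > 0, ∀ᶠ n : ℕ in atTop,
      κ * (n : ℝ) ^ (-((β + δ) / α + 2 * β)) ≤ ∫ t in (n : ℝ)..n + 1, ‖f (x t)‖ ^ 2 := by
  have hθ_small : ∀ᶠ n : ℕ in atTop, (n : ℝ) ^ (-β) < 2 * c :=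
    ((tendsto_rpow_neg_atTop hβ).comp tendsto_natCast_atTop_atTop).eventually_lt_const
      (by positivity)
  set R : ℝ := (c / (2 * (G * 2 ^ δ))) ^ α⁻¹
  have hR0 : 0 < R := by positivity
  have hradius_small : ∀ᶠ n : ℕ in atTop, (n : ℝ) ^ (-((β + δ) / α)) < 1 / 2 / R :=
    ((tendsto_rpow_neg_atTop (by positivity)).comp tendsto_natCast_atTop_atTop
      ).eventually_lt_const (by positivity)
  refine ⟨R / 16, by positivity, ?_⟩
  filter_upwards [hlarge, hθ_small, hradius_small, eventually_ge_atTop 1]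
    with n ⟨s, hs, hsθ⟩ hnθ hnr hn
  have hn1 : (1 : ℝ) ≤ n := Nat.one_le_cast.2 hn
  refine hf.mul_rpow_le_integral hc hα (by positivity) (by positivity)
    (intervalIntegrable_of_locallyIntegrableOn_Ici hint (by linarith) (by linarith))
    (fun v hv t ht ↦ ?_) hnθ.le ((lt_div_iff₀' hR0).1 hnr).le hs hsθ
  calc dist (x v) (x t) ≤ G * (n + 1) ^ δ * |v - t| ^ α :=
        hx _ v ⟨by linarith [hv.1], hv.2⟩ t ⟨by linarith [ht.1], ht.2⟩
          (abs_le.2 ⟨by linarith [hv.1, ht.2], by linarith [hv.2, ht.1]⟩)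
    _ ≤ G * (2 * n) ^ δ * |v - t| ^ α := by gcongr; linarith
    _ = G * 2 ^ δ * n ^ δ * |v - t| ^ α := by
        rw [Real.mul_rpow two_pos.le (by positivity), ← mul_assoc G]

end NormPersistent

theorem tendsto_rpow_sub_one_mul_integral_atTop {g : ℝ → ℝ} {κ e ε : ℝ}
    (hg : LocallyIntegrableOn g (Ici 0)) (hg0 : ∀ t, 0 ≤ g t) (hκ : 0 < κ) (he : 0 ≤ e)
    (heε : e < ε) (hblock : ∀ᶠ n : ℕ in atTop, κ * (n : ℝ) ^ (-e) ≤ ∫ t in (n : ℝ)..n + 1, g t) :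
    Tendsto (fun T : ℝ ↦ T ^ (ε - 1) * ∫ t in 0..T, g t) atTop atTop := by
  have hint {a b : ℝ} (ha : 0 ≤ a) (hb : 0 ≤ b) : IntervalIntegrable g volume a b :=
    intervalIntegrable_of_locallyIntegrableOn_Ici hg ha hb
  obtain ⟨N, hN⟩ := eventually_atTop.1 (hblock.and (eventually_gt_atTop 0))
  refine tendsto_atTop_mono' atTop ?_
    ((tendsto_rpow_atTop (sub_pos.2 heε)).const_mul_atTop (half_pos hκ))
  filter_upwards [eventually_ge_atTop (2 * (N + 1) : ℝ)] with T hT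
  have hT0 : 0 < T := by linarith [N.cast_nonneg (α := ℝ)]
  have hfloor := Nat.floor_le hT0.le
  have hfloor' := Nat.lt_floor_add_one T
  have hNT : N ≤ ⌊T⌋₊ := Nat.le_floor (by linarith)
  have hsum : (⌊T⌋₊ - N : ℝ) * (κ * T ^ (-e)) ≤ ∫ t in (N : ℝ)..⌊T⌋₊, g t := by
    rw [← intervalIntegral.sum_integral_adjacent_intervals_Ico (a := fun n : ℕ ↦ (n : ℝ)) hNT
      fun n _ ↦ hint n.cast_nonneg (n + 1).cast_nonneg, ← Nat.cast_sub hNT, ← Nat.card_Ico,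
      ← nsmul_eq_mul]
    refine Finset.card_nsmul_le_sum _ _ _ fun n hn ↦ ?_
    rw [Finset.mem_Ico] at hn
    obtain ⟨hle, hn0⟩ := hN n hn.1
    have hnT : (n : ℝ) ≤ T := (Nat.cast_le.2 hn.2.le).trans hfloor
    rw [Nat.cast_succ]
    refine le_trans ?_ hle
    gcongr κ * ?_
    exact Real.rpow_le_rpow_of_nonpos (Nat.cast_pos.2 hn0) hnT (by linarith)
  calc κ / 2 * T ^ (ε - e) = T ^ (ε - 1) * (T / 2 * (κ * T ^ (-e))) := by
        rw [show ε - e = (ε - 1) + 1 + -e by ring, Real.rpow_add hT0, Real.rpow_add hT0,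
          Real.rpow_one]
        ring
    _ ≤ T ^ (ε - 1) * ((⌊T⌋₊ - N) * (κ * T ^ (-e))) := by gcongr; linarith
    _ ≤ T ^ (ε - 1) * ∫ t in (N : ℝ)..⌊T⌋₊, g t := by gcongr
    _ ≤ T ^ (ε - 1) * ∫ t in 0..T, g t := by
        gcongr
        exact intervalIntegral.integral_mono_interval N.cast_nonneg (Nat.cast_le.2 hNT) hfloor
          (.of_forall hg0) (hint le_rfl hT0.le)

theorem eventually_exists_half_rpow_neg_le_abs_comp {f x : ℝ → ℝ} {K ηs δ : ℝ} (hδ : 0 < δ)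
    (hηs : 0 < ηs)
    (hf : ∀ η ∈ Ioo (0 : ℝ) ηs, ∀ y : ℝ,
      ((η ^ K : ℝ) : EReal) ≤ ⨆ z ∈ Ico y (y + η), ((|f z| : ℝ) : EReal) ∧
      ((η ^ K : ℝ) : EReal) ≤ ⨆ z ∈ Ioc (y - η) y, ((|f z| : ℝ) : EReal))
    (hx : ContinuousOn x (Ici 0))
    (hmove : ∀ᶠ n : ℕ in atTop, ∃ t ∈ Icc (n : ℝ) (n + 1), (n : ℝ) ^ (-δ) < |x t - x n|) :
    ∀ᶠ n : ℕ in atTop, ∃ s ∈ Icc (n : ℝ) (n + 1), (n : ℝ) ^ (-(δ * K)) / 2 ≤ |f (x s)| := by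
  filter_upwards [hmove, eventually_gt_atTop 0,
    ((tendsto_rpow_neg_atTop hδ).comp tendsto_natCast_atTop_atTop).eventually_lt_const hηs]
    with n ⟨t, ht, hxt⟩ hn hnηs
  have hn0 : (0 : ℝ) < n := Nat.cast_pos.2 hn
  have hη : 0 < (n : ℝ) ^ (-δ) := by positivity
  have hxn : ContinuousOn x (Icc n (n + 1)) := hx.mono fun s hs ↦ hn0.le.trans hs.1
  obtain ⟨hright, hleft⟩ := hf _ ⟨hη, hnηs⟩ (x n)
  rw [← neg_mul, Real.rpow_mul hn0.le]
  exact exists_half_le_comp_of_lt_abs_sub (g := fun y ↦ |f y|) hxn ht hxt (by positivity)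
    hright hleft

theorem NormPersistent.tendsto_rpow_sub_one_mul_setIntegral_sq_comp_atTop {E F : Type*}
    [PseudoMetricSpace E] [SeminormedAddCommGroup F] {f : E → F} {x : ℝ → E} {c G α β δ ε : ℝ}
    (hfc : NormPersistent f c) (hc : 0 < c) (hf : Continuous f) (hx : ContinuousOn x (Ici 0))
    (hα : 0 < α) (hβ : 0 < β) (hδ : 0 ≤ δ) (hG : 0 < G)
    (hxG : ∀ T, ∀ s ∈ Icc 0 T, ∀ t ∈ Icc 0 T, |s - t| ≤ 1 →
      dist (x s) (x t) ≤ G * T ^ δ * |s - t| ^ α)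
    (hlarge : ∀ᶠ n : ℕ in atTop, ∃ s ∈ Icc (n : ℝ) (n + 1), (n : ℝ) ^ (-β) / 2 ≤ ‖f (x s)‖)
    (hε : (β + δ) / α + 2 * β < ε) :
    Tendsto (fun T : ℝ ↦ T ^ (ε - 1) * ∫ t in Ioc 0 T, ‖f (x t)‖ ^ 2) atTop atTop := by
  have hint : LocallyIntegrableOn (fun t ↦ ‖f (x t)‖ ^ 2) (Ici 0) :=
    ((hf.norm.pow 2).comp_continuousOn hx).locallyIntegrableOn measurableSet_Ici
  obtain ⟨κ, hκ, hblock⟩ :=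
    hfc.exists_eventually_mul_rpow_le_integral hc hα hβ hδ hG hint hxG hlarge
  refine (tendsto_rpow_sub_one_mul_integral_atTop hint (fun t ↦ by positivity) hκ (by positivity)
    hε hblock).congr' ?_
  filter_upwards [eventually_ge_atTop 0] with T hT
  rw [intervalIntegral.integral_of_le hT]

end Divergence

theorem stmt_4_general
    {Ω : Type*} [MeasurableSpace Ω] (P : Measure Ω) (X : ℝ → Ω → ℝ) (f : ℝ → ℝ)
    (hXmeas : ∀ t, AEStronglyMeasurable (X t) P)
    (hXcont : ∀ᵐ ω ∂P, ContinuousOn (fun t ↦ X t ω) (Ici 0))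
    (hA1i : ∃ K > (0 : ℝ), ∃ ηs > (0 : ℝ), ∀ η ∈ Ioo (0 : ℝ) ηs, ∀ x : ℝ,
      (((η ^ K : ℝ) : EReal) ≤ ⨆ y ∈ Ico x (x + η), ((|f y| : ℝ) : EReal)) ∧
      (((η ^ K : ℝ) : EReal) ≤ ⨆ y ∈ Ioc (x - η) x, ((|f y| : ℝ) : EReal)))
    (hf : LocallyLipschitz f) (hf_inf : ∃ κ > 0, ∀ᶠ x in cocompact ℝ, κ ≤ ‖f x‖)
    (hA2i : ∃ ρ > (0 : ℝ), ∀ r > (1 : ℝ), ∃ B : ℝ, ∀ s t : ℝ, 0 ≤ s → s < t → t < s + 1 →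
      eLpNorm (fun ω ↦ X t ω - X s ω) (ENNReal.ofReal r) P ≤ ENNReal.ofReal (B * (t - s) ^ ρ))
    (hA2iii : ∃ Δs > (0 : ℝ), ∃ γ > (0 : ℝ), ∃ lam > (0 : ℝ), ∃ μ₀ > (0 : ℝ),
      ∃ K₁ > (0 : ℝ), ∃ K₂ > (0 : ℝ), ∃ K₃ > (0 : ℝ),
      ∀ s : ℝ, 0 ≤ s → ∀ Δ ∈ Ioo (0 : ℝ) Δs, ∀ η ∈ Ioo (0 : ℝ) (K₃ * Δ ^ γ),
        P {ω | ∀ t ∈ Icc s (s + Δ), |X t ω - X s ω| ≤ η}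
          ≤ ENNReal.ofReal (K₁ * Real.exp (-K₂ * η ^ (-lam) * Δ ^ μ₀))) :
    ∀ ε > (0 : ℝ), ∀ᵐ ω ∂P,
      Tendsto (fun T : ℝ ↦ T ^ (ε - 1) * ∫ t in Ioc (0 : ℝ) T, (f (X t ω)) ^ 2) atTop atTop := by
  intro ε hε
  obtain ⟨K, hK, ηs, hηs, hA1i⟩ := hA1i
  obtain ⟨κ, hκ, hfκ⟩ := hf_inf
  obtain ⟨c, hc, hfc⟩ := exists_normPersistent_of_locallyLipschitz hf hκ hfκ
  obtain ⟨ρ, hρ, hA2i⟩ := hA2i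
  obtain ⟨Δs, hΔs, γ, -, lam, hlam, μ₀, -, K₁, -, K₂, hK₂, K₃, hK₃, hball⟩ := hA2iii
  obtain ⟨δ, hδ, hδρ, hδε⟩ : ∃ δ > 0, δ < ρ / 2 ∧ (δ * K + δ) / (ρ / 2) + 2 * (δ * K) < ε := by
    have hpos : ∀ᶠ δ : ℝ in 𝓝[>] 0, 0 < δ := self_mem_nhdsWithin
    have hexp : Tendsto (fun δ : ℝ ↦ (δ * K + δ) / (ρ / 2) + 2 * (δ * K)) (𝓝 0) (𝓝 0) :=
      Continuous.tendsto' (by fun_prop) 0 0 (by simp)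
    exact (hpos.and (((eventually_lt_nhds (half_pos hρ)).and
      (hexp.eventually_lt_const hε)).filter_mono nhdsWithin_le_nhds)).exists
  obtain ⟨B, hB⟩ := hA2i (1 + 1 / δ) (lt_add_of_pos_right 1 (by positivity))
  have hδr : 1 < δ * (1 + 1 / δ) := by
    rw [mul_add, mul_one_div_cancel hδ.ne']
    linarith
  have hholder := ae_exists_dist_le_mul_rpow_mul_abs_sub_rpow hXmeas hXcont (by positivity)
    (half_pos hρ) hδr (by linarith) hB
  have hmove := ae_eventually_exists_mem_Icc_add_one_rpow_neg_lt_dist (X := X) hΔs hK₂ hK₃ hlam hδ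
    (by simpa only [Real.dist_eq] using hball)
  filter_upwards [hXcont, hholder, hmove] with ω hx ⟨G, hG, hxG⟩ hxmove
  simpa only [Real.norm_eq_abs, sq_abs] using
    hfc.tendsto_rpow_sub_one_mul_setIntegral_sq_comp_atTop hc hf.continuous hx (half_pos hρ)
      (mul_pos hδ hK) hδ.le hG hxG
      (eventually_exists_half_rpow_neg_le_abs_comp hδ hηs hA1i hx hxmove) hδε

/-- the divergence theorem without the `L^{∞-}` boundedness (A2)(ii), replaced
by the polynomial lower growth condition (A1)(iii) `|f(x)| ≥ Q|x|^p` for `|x| ≥ C`: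
for every `ε > 0`, almost surely `T^{ε-1} ∫₀^T f(X_t)² dt → ∞` as `T → ∞`. -/
theorem stmt_4
    {Ω : Type*} [MeasurableSpace Ω] (P : Measure Ω) [IsProbabilityMeasure P]
    (X : ℝ → Ω → ℝ) (f : ℝ → ℝ)
    (hXmeas : Measurable (Function.uncurry X))
    (hXcont : ∀ᵐ ω ∂P, ContinuousOn (fun t => X t ω) (Ici 0))
    -- (A1)(i)
    (hA1i : ∃ K > (0:ℝ), ∃ ηs > (0:ℝ), ∀ η ∈ Ioo (0:ℝ) ηs, ∀ x : ℝ,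
      (((η ^ K : ℝ) : EReal) ≤ ⨆ y ∈ Ico x (x + η), ((|f y| : ℝ) : EReal)) ∧
      (((η ^ K : ℝ) : EReal) ≤ ⨆ y ∈ Ioc (x - η) x, ((|f y| : ℝ) : EReal)))
    -- (A1)(ii)
    (hfC1 : ContDiff ℝ 1 f)
    (hA1ii : ∃ C₀ > (0:ℝ), ∀ x : ℝ, |deriv f x| ≤ C₀ * (1 + |x|) ^ C₀)
    -- (A1)(iii): polynomial lower growth
    (hA1iii : ∃ Q > (0:ℝ), ∃ p > (0:ℝ), ∃ C > (0:ℝ), ∀ x : ℝ, C ≤ |x| →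
      Q * |x| ^ p ≤ |f x|)
    -- (A2)(i): Hölder continuity in L^{∞-}
    (hA2i : ∃ ρ > (0:ℝ), ∀ r > (1:ℝ), ∃ B : ℝ, ∀ s t : ℝ, 0 ≤ s → s < t → t < s + 1 →
      eLpNorm (fun ω => X t ω - X s ω) (ENNReal.ofReal r) P
        ≤ ENNReal.ofReal (B * (t - s) ^ ρ))
    -- (A2)(iii): relaxed small ball estimate
    (hA2iii : ∃ Δs > (0:ℝ), ∃ γ > (0:ℝ), ∃ lam > (0:ℝ), ∃ μ₀ > (0:ℝ),
      ∃ K₁ > (0:ℝ), ∃ K₂ > (0:ℝ), ∃ K₃ > (0:ℝ),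
      ∀ s : ℝ, 0 ≤ s → ∀ Δ ∈ Ioo (0:ℝ) Δs, ∀ η ∈ Ioo (0:ℝ) (K₃ * Δ ^ γ),
        P {ω | ∀ t ∈ Icc s (s + Δ), |X t ω - X s ω| ≤ η}
          ≤ ENNReal.ofReal (K₁ * Real.exp (-K₂ * η ^ (-lam) * Δ ^ μ₀))) :
    ∀ ε > (0:ℝ), ∀ᵐ ω ∂P,
      Tendsto (fun T : ℝ => T ^ (ε - 1) * ∫ t in Ioc (0:ℝ) T, (f (X t ω)) ^ 2)
        atTop atTop := by
  obtain ⟨Q, hQ, p, hp, C, hC, hgrowth⟩ := hA1iii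
  exact stmt_4_general P X f (fun t ↦ hXmeas.of_uncurry_left.aestronglyMeasurable) hXcont hA1i
    hfC1.locallyLipschitz ⟨Q * C ^ p, by positivity,
      eventually_cocompact_le_of_mul_rpow_le hQ.le hp.le hC.le hgrowth⟩ hA2i hA2iii
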